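/- Every eigenvalue of the nonuniform second-difference matrix P is real and nonpositive. -/

import Mathlib

open Matrix Finset

/-- Spectral (operator 2-) norm of a real square matrix. -/
noncomputable def specNorm {N : ℕ} (A : Matrix (Fin N) (Fin N) ℝ) : ℝ :=
  ‖Matrix.toEuclideanCLM (𝕜 := ℝ) A‖

/-- The nonuniform second-difference (tridiagonal) matrix on a grid with step sizes `h`. -/
noncomputable def Pmat (N : ℕ) (h : Fin (N + 1) → ℝ) : Matrix (Fin N) (Fin N) ℝ :=
  Matrix.of fun i j =>
    if (i : ℕ) = (j : ℕ) then -2 / (h i.castSucc * h i.succ)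
    else if (i : ℕ) + 1 = (j : ℕ) then 2 / (h i.succ * (h i.castSucc + h i.succ))
    else if (j : ℕ) + 1 = (i : ℕ) then 2 / (h i.castSucc * (h i.castSucc + h i.succ))
    else 0

/-!
Weighting row `i` of `P` by the length `hᵢ₋₁ + hᵢ` of the two cells adjacent to node `i` gives
`W P = -Dᵀ diag(2/h) D`, with `D` the difference matrix of the grid. Hence an eigenvector `v` of `P`
for `μ` satisfies `μ v* W v = -(D v)* diag(2/h) (D v) ≤ 0`, where `v* W v > 0`; in the order of `ℂ`
this says at once that `μ` is real and nonpositive.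
-/

open scoped ComplexOrder

section WeightedEigenvalue

variable {𝕜 n : Type*} [RCLike 𝕜]

theorem posSemidef_map_ofReal [Finite n] {A : Matrix n n ℝ} (hA : A.PosSemidef) :
    (A.map (RCLike.ofReal : ℝ → 𝕜)).PosSemidef := by
  obtain ⟨m, u, rfl⟩ := posSemidef_iff_eq_sum_vecMulVec.1 hA
  refine posSemidef_iff_eq_sum_vecMulVec.2 ⟨m, fun k i => (u k i : 𝕜), ?_⟩
  ext i j
  simp [Matrix.sum_apply, vecMulVec_apply]

variable [Fintype n]

theorem nonneg_of_mulVec_eq_smul_mulVec {K W : Matrix n n 𝕜} (hK : K.PosSemidef) (hW : W.PosDef)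
    {μ : 𝕜} {v : n → 𝕜} (hv : v ≠ 0) (heig : K *ᵥ v = μ • (W *ᵥ v)) : 0 ≤ μ := by
  have hKv : 0 ≤ μ * (star v ⬝ᵥ W *ᵥ v) := by
    simpa only [heig, dotProduct_smul, smul_eq_mul] using hK.dotProduct_mulVec_nonneg v
  exact le_of_mul_le_mul_of_pos_right (by rwa [zero_mul]) (hW.dotProduct_mulVec_pos hv)

theorem eigenvalue_nonpos_of_posSemidef_neg_diagonal_mul [DecidableEq n] {A : Matrix n n ℝ}
    {w : n → ℝ} (hw : ∀ i, 0 < w i) (hA : (-(diagonal w * A)).PosSemidef) {μ : 𝕜} {v : n → 𝕜}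
    (hv : v ≠ 0) (heig : A.map (RCLike.ofReal : ℝ → 𝕜) *ᵥ v = μ • v) : μ ≤ 0 := by
  have hW : (diagonal fun i => (w i : 𝕜)).PosDef :=
    PosDef.diagonal fun i => RCLike.ofReal_pos.2 (hw i)
  have hmap : (-(diagonal w * A)).map (RCLike.ofReal : ℝ → 𝕜) =
      -((diagonal fun i => (w i : 𝕜)) * A.map RCLike.ofReal) := by
    ext i j
    simp
  refine neg_nonneg.1 (nonneg_of_mulVec_eq_smul_mulVec (posSemidef_map_ofReal hA) hW hv ?_)
  rw [hmap, neg_mulVec, ← mulVec_mulVec, heig, mulVec_smul, neg_smul]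

end WeightedEigenvalue

/-- The difference matrix `(D x)ₖ = xₖ - xₖ₋₁` of a grid with `N` interior nodes and `N + 1` cells,
where `x` is extended by zero to the two boundary nodes. -/
def diffMatrix (R : Type*) [Ring R] (N : ℕ) : Matrix (Fin (N + 1)) (Fin N) R :=
  Matrix.of fun k j => (if k = j.castSucc then 1 else 0) - (if k = j.succ then 1 else 0)

theorem diffMatrix_transpose_mul_diagonal_mul_apply {R : Type*} [Ring R] {N : ℕ}
    (c : Fin (N + 1) → R) (i j : Fin N) :
    ((diffMatrix R N)ᵀ * diagonal c * diffMatrix R N) i j =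
      if (i : ℕ) = j then c i.castSucc + c i.succ
      else if (i : ℕ) + 1 = j then -c i.succ
      else if (j : ℕ) + 1 = i then -c i.castSucc
      else 0 := by
  have hexpand : ((diffMatrix R N)ᵀ * diagonal c * diffMatrix R N) i j =
      diagonal c i.castSucc j.castSucc - diagonal c i.succ j.castSucc -
        (diagonal c i.castSucc j.succ - diagonal c i.succ j.succ) := by
    simp [Matrix.mul_apply, diffMatrix, sub_mul, mul_sub]
  rw [hexpand]
  simp only [diagonal_apply, Fin.ext_iff, Fin.val_castSucc, Fin.val_succ]
  split_ifs <;> first | lia | simp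

theorem diagonal_mul_Pmat {N : ℕ} {h : Fin (N + 1) → ℝ} (hpos : ∀ i, 0 < h i) :
    diagonal (fun i : Fin N => h i.castSucc + h i.succ) * Pmat N h =
      -((diffMatrix ℝ N)ᵀ * diagonal (fun k => 2 / h k) * diffMatrix ℝ N) := by
  ext i j
  have hleft := hpos i.castSucc
  have hright := hpos i.succ
  rw [diagonal_mul, neg_apply, diffMatrix_transpose_mul_diagonal_mul_apply, Pmat, of_apply]
  split_ifs
  · field_simp
    ring
  · field_simp
  · field_simp
  · simp

theorem posSemidef_neg_diagonal_mul_Pmat {N : ℕ} {h : Fin (N + 1) → ℝ} (hpos : ∀ i, 0 < h i) :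
    (-(diagonal (fun i : Fin N => h i.castSucc + h i.succ) * Pmat N h)).PosSemidef := by
  have hc : (diagonal fun k => 2 / h k).PosSemidef :=
    PosSemidef.diagonal fun k => (div_pos two_pos (hpos k)).le
  rw [diagonal_mul_Pmat hpos, neg_neg, ← conjTranspose_eq_transpose_of_trivial]
  exact hc.conjTranspose_mul_mul_same _

theorem P_eigenvalues_real_nonpos (N : ℕ) (h : Fin (N + 1) → ℝ)
    (hpos : ∀ i, 0 < h i) (μ : ℂ) (v : Fin N → ℂ) (hv : v ≠ 0)
    (heig : ((Pmat N h).map Complex.ofReal).mulVec v = μ • v) :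
    μ.im = 0 ∧ μ.re ≤ 0 := by
  have hw (i : Fin N) : 0 < h i.castSucc + h i.succ := add_pos (hpos _) (hpos _)
  have hμ := eigenvalue_nonpos_of_posSemidef_neg_diagonal_mul hw
    (posSemidef_neg_diagonal_mul_Pmat hpos) hv heig
  exact (RCLike.nonpos_iff.1 hμ).symm
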